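/- Let (A,Λ) be any associative form ring, let (I,Γ) and (J,Δ) be two form ideals of (A,Λ), and let n ≥ 3. Then [FU(2n,I,Γ), FU(2n,J,Δ)] is central in EU(2n,A,Λ) modulo EU(2n,(I,Γ)∘(J,Δ)); that is, [[FU(2n,I,Γ), FU(2n,J,Δ)], EU(2n,A,Λ)] ≤ EU(2n,(I,Γ)∘(J,Δ)). -/

import Mathlib

open Matrix
open scoped commutatorElement

/-- Bak's form ring data on a ring `A`: an involution `bar`, a central symmetry
`λ` with `λ λ̄ = 1`, and a form parameter `Λ`. -/
structure FormRingData (A : Type*) [Ring A] where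
  bar : A →+ A
  bar_mul : ∀ a b : A, bar (a * b) = bar b * bar a
  bar_bar : ∀ a : A, bar (bar a) = a
  lam : A
  lam_comm : ∀ a : A, lam * a = a * lam
  lam_bar : lam * bar lam = 1
  Lambda : AddSubgroup A
  lambdaMin_mem : ∀ c : A, c - lam * bar c ∈ Lambda
  lambdaMax_mem : ∀ x ∈ Lambda, x = -(lam * bar x)
  lambda_conj : ∀ (c : A), ∀ x ∈ Lambda, c * x * bar c ∈ Lambda

namespace FormRingData

variable {A : Type*} [Ring A]

/-- Integral powers of the symmetry `λ`; negative powers use `λ̄ = λ⁻¹`. -/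
def lpow (D : FormRingData A) (k : ℤ) : A :=
  if 0 ≤ k then D.lam ^ k.toNat else (D.bar D.lam) ^ (-k).toNat

end FormRingData

/-- The index set `Ω = {1,…,n,−n,…,−1}`, coded as `Fin n × Bool`
(second component `true` = positive index). -/
abbrev Idx (n : ℕ) := Fin n × Bool

namespace Idx

/-- The involution `i ↦ −i` on indices. -/
def neg {n : ℕ} (i : Idx n) : Idx n := (i.1, !i.2)

/-- The sign `ε(i) ∈ {±1}`. -/
def eps {n : ℕ} (i : Idx n) : ℤ := if i.2 then 1 else -1

theorem neg_ne {n : ℕ} (i : Idx n) : neg i ≠ i := by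
  simp [neg, Prod.ext_iff]

theorem neg_injective {n : ℕ} : Function.Injective (neg (n := n)) := by
  intro i j h
  simp only [neg, Prod.mk.injEq] at h
  refine Prod.ext h.1 ?_
  have h2 := h.2
  cases hi : i.2 <;> cases hj : j.2 <;> simp_all

theorem neg_neg {n : ℕ} (i : Idx n) : neg (neg i) = i := by
  simp [neg]

end Idx

/-- `GL(2n, A)`, realised as the units of the `Ω × Ω` matrix ring over `A`. -/
abbrev GLn (A : Type*) [Ring A] (n : ℕ) := (Matrix (Idx n) (Idx n) A)ˣ

section aux

theorem one_add_mul_one_sub {R : Type*} [Ring R] {X : R} (h : X * X = 0) :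
    (1 + X) * (1 - X) = 1 := by
  have hh : (1 + X) * (1 - X) = 1 - X * X := by noncomm_ring
  rw [hh, h, sub_zero]

theorem one_sub_mul_one_add {R : Type*} [Ring R] {X : R} (h : X * X = 0) :
    (1 - X) * (1 + X) = 1 := by
  have hh : (1 - X) * (1 + X) = 1 - X * X := by noncomm_ring
  rw [hh, h, sub_zero]

theorem stdBasisMatrix_neg' {A : Type*} [Ring A] {n : ℕ} (i j : Idx n) (c : A) :
    Matrix.single i j (-c) = -Matrix.single i j c := by
  refine eq_neg_of_add_eq_zero_left ?_
  rw [← Matrix.single_add]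
  simp

end aux

namespace FormRingData

variable {A : Type*} [Ring A] {n : ℕ}

/-- The off-diagonal part of a short root element. -/
def Xmat (D : FormRingData A) (i j : Idx n) (c : A) : Matrix (Idx n) (Idx n) A :=
  Matrix.single i j c -
    Matrix.single (Idx.neg j) (Idx.neg i) (D.lpow ((Idx.eps j - Idx.eps i) / 2) * D.bar c)

theorem Xmat_mul (D : FormRingData A) {i j : Idx n} (hij : i ≠ j) (c c' : A) :
    D.Xmat i j c * D.Xmat i j c' = 0 := by
  unfold Xmat
  rw [sub_mul, mul_sub, mul_sub,
    Matrix.single_mul_single_of_ne _ _ _ _ (Ne.symm hij),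
    Matrix.single_mul_single_of_ne _ _ _ _ (Ne.symm (Idx.neg_ne j)),
    Matrix.single_mul_single_of_ne _ _ _ _ (Idx.neg_ne i),
    Matrix.single_mul_single_of_ne _ _ _ _ (fun h => hij (Idx.neg_injective h))]
  simp

theorem Xmat_neg (D : FormRingData A) (i j : Idx n) (c : A) :
    D.Xmat i j (-c) = -D.Xmat i j c := by
  unfold Xmat
  rw [map_neg, mul_neg, stdBasisMatrix_neg', stdBasisMatrix_neg']
  abel

/-- The elementary short root unipotent `T_{ij}(c)`, for `i ≠ ±j`
(with junk value `1` when `i = j`). -/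
def TS (D : FormRingData A) (i j : Idx n) (c : A) : GLn A n :=
  if h : i = j then 1 else
    { val := 1 + D.Xmat i j c
      inv := 1 + D.Xmat i j (-c)
      val_inv := by
        rw [D.Xmat_neg, ← sub_eq_add_neg]
        exact one_add_mul_one_sub (D.Xmat_mul h c c)
      inv_val := by
        rw [D.Xmat_neg, ← sub_eq_add_neg]
        exact one_sub_mul_one_add (D.Xmat_mul h c c) }

/-- The elementary long root unipotent `T_{i,−i}(c)`. -/
def TL (D : FormRingData A) (i : Idx n) (c : A) : GLn A n where
  val := 1 + Matrix.single i (Idx.neg i) c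
  inv := 1 + Matrix.single i (Idx.neg i) (-c)
  val_inv := by
    rw [stdBasisMatrix_neg', ← sub_eq_add_neg]
    exact one_add_mul_one_sub (Matrix.single_mul_single_of_ne _ _ _ _ (Idx.neg_ne i) _)
  inv_val := by
    rw [stdBasisMatrix_neg', ← sub_eq_add_neg]
    exact one_sub_mul_one_add (Matrix.single_mul_single_of_ne _ _ _ _ (Idx.neg_ne i) _)

/-- The elementary unitary transvection `T_{ij}(c)` (long or short root type
according to whether `j = −i`). -/
def T (D : FormRingData A) (i j : Idx n) (c : A) : GLn A n :=
  if j = Idx.neg i then D.TL i c else D.TS i j c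

/-- The elementary commutator `Y_{ij}(a,b) = [T_{ij}(a), T_{ji}(b)]`. -/
def Y (D : FormRingData A) (i j : Idx n) (a b : A) : GLn A n :=
  ⁅D.T i j a, D.T j i b⁆

/-- The elementary conjugate `Z_{ij}(a,c) = T_{ji}(c) T_{ij}(a) T_{ji}(−c)`. -/
def Z (D : FormRingData A) (i j : Idx n) (a c : A) : GLn A n :=
  D.T j i c * D.T i j a * D.T j i (-c)

/-- The set of elementary unitary transvections of level `(I,Γ)`. -/
def transvGen (D : FormRingData A) (n : ℕ) (I Γ : AddSubgroup A) : Set (GLn A n) :=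
  {x | ∃ i j : Idx n, i ≠ j ∧ i ≠ Idx.neg j ∧ ∃ c ∈ I, x = D.TS i j c} ∪
    {x | ∃ i : Idx n, ∃ g ∈ Γ, x = D.TL i (D.lpow (-(Idx.eps i + 1) / 2) * g)}

/-- The unrelative elementary subgroup `FU(2n, I, Γ)`. -/
def FU (D : FormRingData A) (n : ℕ) (I Γ : AddSubgroup A) : Subgroup (GLn A n) :=
  Subgroup.closure (D.transvGen n I Γ)

/-- The absolute elementary unitary group `EU(2n, A, Λ)`. -/
def EUmax (D : FormRingData A) (n : ℕ) : Subgroup (GLn A n) :=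
  D.FU n ⊤ D.Lambda

/-- The relative elementary subgroup `EU(2n, I, Γ)`: the normal closure of
`FU(2n, I, Γ)` in `EU(2n, A, Λ)`. -/
def EU (D : FormRingData A) (n : ℕ) (I Γ : AddSubgroup A) : Subgroup (GLn A n) :=
  Subgroup.closure {x | ∃ g ∈ D.EUmax n, ∃ t ∈ D.transvGen n I Γ, x = g * t * g⁻¹}

/-- The additive subgroup generated by products `st`, `s ∈ S`, `t ∈ T`. -/
def mulSub (S T : AddSubgroup A) : AddSubgroup A :=
  AddSubgroup.closure {x | ∃ a ∈ S, ∃ b ∈ T, x = a * b}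

/-- The symmetrised product `ST + TS` of two (additive subgroups underlying)
two-sided ideals. -/
def symI (S T : AddSubgroup A) : AddSubgroup A :=
  mulSub S T ⊔ mulSub T S

/-- The minimal relative form parameter `Γ_min(K)` of level `K`. -/
def gammaMin (D : FormRingData A) (K : AddSubgroup A) : AddSubgroup A :=
  AddSubgroup.closure
    ({x | ∃ a ∈ K, x = a - D.lam * D.bar a} ∪
      {x | ∃ a ∈ K, ∃ c ∈ D.Lambda, x = a * c * D.bar a})

/-- The relative form parameter `ˢΓ = ⟨ b γ b̄ ∣ b ∈ S, γ ∈ Γ ⟩`. -/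
def conjPar (D : FormRingData A) (S Γ : AddSubgroup A) : AddSubgroup A :=
  AddSubgroup.closure {x | ∃ b ∈ S, ∃ g ∈ Γ, x = b * g * D.bar b}

/-- The relative form parameter of the symmetrised product
`(I,Γ)∘(J,Δ) = (IJ+JI, Γ_min(IJ+JI) + ᴶΓ + ᴵΔ)`. -/
def symG (D : FormRingData A) (I Γ J Δ : AddSubgroup A) : AddSubgroup A :=
  D.gammaMin (symI I J) ⊔ D.conjPar J Γ ⊔ D.conjPar I Δ

/-- The elementary subgroup `EU(2n, (I,Γ)∘(J,Δ))` of the symmetrised product. -/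
def EUsym (D : FormRingData A) (n : ℕ) (I Γ J Δ : AddSubgroup A) : Subgroup (GLn A n) :=
  D.EU n (symI I J) (D.symG I Γ J Δ)

/-- Position-dependent membership `a ∈ (I,Γ)` at position `(i,j)`:
`a ∈ I` for a short root position, `a ∈ λ^{−(ε(i)+1)/2}Γ` for a long one. -/
def pmem (D : FormRingData A) (I Γ : AddSubgroup A) {n : ℕ} (i j : Idx n) (a : A) : Prop :=
  if j = Idx.neg i then ∃ g ∈ Γ, a = D.lpow (-(Idx.eps i + 1) / 2) * g else a ∈ I

end FormRingData

/-- A form ideal `(I,Γ)` of the form ring `(A,Λ)`. -/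
structure FormIdeal {A : Type*} [Ring A] (D : FormRingData A) where
  I : AddSubgroup A
  Gamma : AddSubgroup A
  mul_mem_left : ∀ (c : A), ∀ x ∈ I, c * x ∈ I
  mul_mem_right : ∀ (c : A), ∀ x ∈ I, x * c ∈ I
  bar_mem : ∀ x ∈ I, D.bar x ∈ I
  gammaMin_le : D.gammaMin I ≤ Gamma
  gamma_le_I : Gamma ≤ I
  gamma_le_Lambda : Gamma ≤ D.Lambda
  gamma_conj : ∀ (c : A), ∀ x ∈ Gamma, c * x * D.bar c ∈ Gamma

set_option linter.unusedSimpArgs false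
set_option linter.unusedVariables false
section grp
variable {G : Type*} [Group G]

theorem com_closure_aux (N E : Subgroup G) (hN : ∀ g ∈ E, ∀ x ∈ N, g * x * g⁻¹ ∈ N)
    (S : Set G) (hS : S ⊆ E) (y : G) (h : ∀ x ∈ S, ⁅x, y⁆ ∈ N) :
    ∀ x ∈ Subgroup.closure S, ⁅x, y⁆ ∈ N := by
  intro x hx
  have hE : ∀ x ∈ Subgroup.closure S, x ∈ E := fun x hx => (Subgroup.closure_le E).2 hS hx
  induction hx using Subgroup.closure_induction with
  | mem x hx => exact h x hx
  | one => simp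
  | mul a b ha hb iha ihb =>
    have : ⁅a * b, y⁆ = (a * ⁅b, y⁆ * a⁻¹) * ⁅a, y⁆ := by simp only [commutatorElement_def]; group
    rw [this]
    exact N.mul_mem (hN _ (hE a ha) _ ihb) iha
  | inv a ha iha =>
    have : ⁅a⁻¹, y⁆ = a⁻¹ * ⁅a, y⁆⁻¹ * a⁻¹⁻¹ := by simp only [commutatorElement_def]; group
    rw [this]
    exact hN _ (E.inv_mem (hE a ha)) _ (N.inv_mem iha)

theorem com_symm_aux (N : Subgroup G) {x y : G} (h : ⁅x, y⁆ ∈ N) : ⁅y, x⁆ ∈ N := by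
  rw [← commutatorElement_inv]; exact N.inv_mem h

theorem com_closure2_aux (N E : Subgroup G) (hN : ∀ g ∈ E, ∀ x ∈ N, g * x * g⁻¹ ∈ N)
    (S S' : Set G) (hS : S ⊆ E) (hS' : S' ⊆ E) (h : ∀ x ∈ S, ∀ y ∈ S', ⁅x, y⁆ ∈ N) :
    ∀ x ∈ Subgroup.closure S, ∀ y ∈ Subgroup.closure S', ⁅x, y⁆ ∈ N := by
  intro x hx y hy
  refine com_closure_aux N E hN S hS y (fun x hx => ?_) x hx
  exact com_symm_aux N (com_closure_aux N E hN S' hS' x (fun y hy => com_symm_aux N (h x hx y hy)) y hy)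

/-- Elements of `E` central modulo `N`. -/
def cenMod (N E : Subgroup G) (hN : ∀ g ∈ E, ∀ x ∈ N, g * x * g⁻¹ ∈ N) : Subgroup G where
  carrier := {c | c ∈ E ∧ ∀ z ∈ E, ⁅c, z⁆ ∈ N}
  one_mem' := ⟨E.one_mem, fun z _ => by simp⟩
  mul_mem' := by
    rintro a b ⟨ha, ha'⟩ ⟨hb, hb'⟩
    refine ⟨E.mul_mem ha hb, fun z hz => ?_⟩
    have : ⁅a * b, z⁆ = (a * ⁅b, z⁆ * a⁻¹) * ⁅a, z⁆ := by simp only [commutatorElement_def]; group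
    rw [this]
    exact N.mul_mem (hN _ ha _ (hb' z hz)) (ha' z hz)
  inv_mem' := by
    rintro a ⟨ha, ha'⟩
    refine ⟨E.inv_mem ha, fun z hz => ?_⟩
    have : ⁅a⁻¹, z⁆ = a⁻¹ * ⁅a, z⁆⁻¹ * a⁻¹⁻¹ := by simp only [commutatorElement_def]; group
    rw [this]
    exact hN _ (E.inv_mem ha) _ (N.inv_mem (ha' z hz))

theorem cenMod_conj (N E : Subgroup G) (hN : ∀ g ∈ E, ∀ x ∈ N, g * x * g⁻¹ ∈ N) :
    ∀ g ∈ E, ∀ x ∈ cenMod N E hN, g * x * g⁻¹ ∈ cenMod N E hN := by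
  rintro g hg x ⟨hx, hx'⟩
  refine ⟨E.mul_mem (E.mul_mem hg hx) (E.inv_mem hg), fun z hz => ?_⟩
  have : ⁅g * x * g⁻¹, z⁆ = g * ⁅x, g⁻¹ * z * g⁆ * g⁻¹ := by
    simp only [commutatorElement_def]; group
  rw [this]
  exact hN _ hg _ (hx' _ (E.mul_mem (E.mul_mem (E.inv_mem hg) hz) hg))

theorem key_aux (N E : Subgroup G) (hN : ∀ g ∈ E, ∀ x ∈ N, g * x * g⁻¹ ∈ N)
    {x y z : G} (hx : x ∈ E) (hy : y ∈ E)
    (h1 : ⁅⁅x⁻¹, z⁆, y⁆ ∈ N) (h2 : ⁅x, ⁅y⁻¹, z⁆⁆ ∈ N) (h3 : ⁅⁅x⁻¹, z⁆, ⁅y⁻¹, z⁆⁆ ∈ N) :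
    ⁅⁅x, y⁆, z⁆ ∈ N := by
  apply com_symm_aux
  have hc : ⁅x, y⁆ ∈ E :=
    E.mul_mem (E.mul_mem (E.mul_mem hx hy) (E.inv_mem hx)) (E.inv_mem hy)
  have : ⁅z, ⁅x, y⁆⁆ = (x * ⁅⁅x⁻¹, z⁆, y⁆ * x⁻¹) * (⁅x, y⁆ *
      (y * ((x * ⁅⁅x⁻¹, z⁆, ⁅y⁻¹, z⁆⁆ * x⁻¹) * ⁅x, ⁅y⁻¹, z⁆⁆) * y⁻¹) * ⁅x, y⁆⁻¹) := by
    simp only [commutatorElement_def]; group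
  rw [this]
  exact N.mul_mem (hN _ hx _ h1) (hN _ hc _ (hN _ hy _ (N.mul_mem (hN _ hx _ h3) h2)))
end grp

theorem ring_comm_SS {R : Type*} [Ring R] {X Y Z : R} (hZ : X * Y - Y * X = Z)
    (h1 : Z * Y = 0) (h2 : Z * X = 0) :
    (1 + X) * (1 + Y) = (1 + Z) * ((1 + Y) * (1 + X)) := by
  have : (1 + Z) * ((1 + Y) * (1 + X)) = 1 + Y + X + Y * X + Z + Z * Y + Z * X + Z * Y * X := by
    noncomm_ring
  rw [this, h1, h2, ← hZ]; noncomm_ring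

theorem ring_comm_LS {R : Type*} [Ring R] {X Y Z : R} (hZ : X * Y - Y * X + Y * X * Y = Z)
    (h1 : Z * Y = - (Y * X * Y)) (h2 : Z * X = 0) (h3 : Y * X * Y * X = 0) :
    (1 + X) * (1 + Y) = (1 + Z) * ((1 + Y) * (1 + X)) := by
  have : (1 + Z) * ((1 + Y) * (1 + X)) = 1 + Y + X + Y * X + Z + Z * Y + Z * X + Z * Y * X := by
    noncomm_ring
  rw [this, h1, h2, neg_mul, h3, ← hZ]; noncomm_ring

theorem comm_eq_aux {G : Type*} [Group G] {x y t : G} (h : x * y = t * (y * x)) : ⁅x, y⁆ = t := by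
  rw [commutatorElement_def, h]; group

namespace FormRingData
variable {A : Type*} [Ring A] {n : ℕ} (D : FormRingData A)

/-- unit `λ^{-(ε(i)+1)/2}` -/
def nu (i : Idx n) : A := D.lpow (-(Idx.eps i + 1) / 2)

theorem bar_one : D.bar 1 = 1 := by
  have h := D.bar_mul 1 (D.bar 1)
  rw [D.bar_bar, one_mul, D.bar_bar] at h
  exact h.symm

theorem nu_true (a : Fin n) : D.nu (a, true) = D.bar D.lam := by
  simp [nu, lpow, Idx.eps]
theorem nu_false (a : Fin n) : D.nu (a, false) = 1 := by
  simp [nu, lpow, Idx.eps]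

theorem bar_lam_comm (a : A) : D.bar D.lam * a = a * D.bar D.lam := by
  have := congrArg D.bar (D.lam_comm (D.bar a))
  rw [D.bar_mul, D.bar_mul, D.bar_bar] at this
  exact this.symm

theorem lam_bar' : D.bar D.lam * D.lam = 1 := by rw [bar_lam_comm, D.lam_bar]

theorem nu_comm (i : Idx n) (a : A) : D.nu i * a = a * D.nu i := by
  obtain ⟨i, _ | _⟩ := i
  · simp [nu_false]
  · simp only [nu_true, bar_lam_comm D a]

theorem nu_bar (i : Idx n) : D.nu i * D.bar (D.nu i) = 1 := by
  obtain ⟨i, _ | _⟩ := i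
  · simp [nu_false, bar_one]
  · simp only [nu_true, D.bar_bar, lam_bar']

theorem bar_nu_comm (i : Idx n) (a : A) : D.bar (D.nu i) * a = a * D.bar (D.nu i) := by
  obtain ⟨i, _ | _⟩ := i
  · simp [nu_false, bar_one]
  · simp only [nu_true, D.bar_bar, D.lam_comm a]

theorem nu_bar' (i : Idx n) : D.bar (D.nu i) * D.nu i = 1 := by
  rw [bar_nu_comm, nu_bar]

theorem nu_neg (i : Idx n) : D.nu i * D.nu (Idx.neg i) = D.bar D.lam := by
  obtain ⟨i, _ | _⟩ := i <;> simp [Idx.neg, nu_false, nu_true]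

theorem mu_eq (i j : Idx n) : D.lpow ((Idx.eps j - Idx.eps i) / 2) = D.nu i * D.bar (D.nu j) := by
  obtain ⟨i, _ | _⟩ := i <;> obtain ⟨j, _ | _⟩ := j <;>
    simp [Idx.eps, nu_false, nu_true, lpow, bar_one, D.bar_bar, lam_bar']

/-- `λ`-power attached to a pair -/
def mu (i j : Idx n) : A := D.nu i * D.bar (D.nu j)

theorem mu_comm (i j : Idx n) (a : A) : D.mu i j * a = a * D.mu i j := by
  rw [mu, mul_assoc, bar_nu_comm, ← mul_assoc, nu_comm, mul_assoc]

theorem mu_mul (i j k : Idx n) : D.mu i j * D.mu j k = D.mu i k := by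
  rw [mu, mu, mul_assoc, ← mul_assoc (D.bar _), nu_bar', one_mul, mu]

theorem mu_mul_mul (i j l : Idx n) (u v : A) :
    D.mu j l * u * (D.mu i j * v) = D.mu i l * (u * v) := by
  rw [← mul_assoc, mul_assoc _ u, ← D.mu_comm i j u, ← mul_assoc, D.mu_comm j l (D.mu i j),
    D.mu_mul, mul_assoc]

theorem mu_bar (i j : Idx n) : D.bar (D.mu i j) = D.mu j i := by
  rw [mu, D.bar_mul, D.bar_bar, mu]

theorem mu_self (i : Idx n) : D.mu i i = 1 := D.nu_bar i

theorem mu_neg (i j : Idx n) : D.mu (Idx.neg j) (Idx.neg i) = D.mu i j := by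
  obtain ⟨i, _ | _⟩ := i <;> obtain ⟨j, _ | _⟩ := j <;>
    simp [mu, Idx.neg, nu_false, nu_true, bar_one, D.bar_bar, lam_bar', D.lam_bar]

theorem mu_nu (i l : Idx n) : D.mu (Idx.neg i) l * D.nu i = D.nu (Idx.neg l) := by
  obtain ⟨i, _ | _⟩ := i <;> obtain ⟨l, _ | _⟩ := l <;>
    simp [mu, Idx.neg, nu_false, nu_true, bar_one, D.bar_bar, lam_bar', D.lam_bar]

theorem Xmat_eq (i j : Idx n) (c : A) : D.Xmat i j c = Matrix.single i j c -
    Matrix.single (Idx.neg j) (Idx.neg i) (D.mu i j * D.bar c) := by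
  rw [Xmat, mu_eq, mu]

theorem nu_skew (i : Idx n) {g : A} (hg : g = -(D.lam * D.bar g)) :
    D.nu i * g = - (D.mu i (Idx.neg i) * D.bar (D.nu i * g)) := by
  have h2 : D.bar D.lam * g = - D.bar g := by
    conv_lhs => rw [hg]
    rw [mul_neg, ← mul_assoc, lam_bar', one_mul]
  obtain ⟨i, _ | _⟩ := i
  · simp [mu, Idx.neg, nu_false, nu_true, bar_one, D.bar_bar]; exact hg
  · simp [mu, Idx.neg, nu_false, nu_true, bar_one, D.bar_bar, D.bar_mul, h2]

theorem nu_min (i : Idx n) (a : A) : ∃ x : A, (x = a ∨ x = - D.bar a) ∧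
    a - D.mu i (Idx.neg i) * D.bar a = D.nu i * (x - D.lam * D.bar x) := by
  obtain ⟨i, _ | _⟩ := i
  · exact ⟨a, Or.inl rfl, by simp [mu, Idx.neg, nu_false, nu_true, bar_one, D.bar_bar]⟩
  · refine ⟨- D.bar a, Or.inr rfl, ?_⟩
    simp [mu, Idx.neg, nu_false, nu_true, bar_one, D.bar_bar, mul_add, ← mul_assoc, lam_bar']
    abel

theorem TS_val {i j : Idx n} (h : i ≠ j) (c : A) :
    ((D.TS i j c : GLn A n) : Matrix (Idx n) (Idx n) A) = 1 + D.Xmat i j c := by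
  simp [TS, h]

theorem TL_val (i : Idx n) (c : A) :
    ((D.TL i c : GLn A n) : Matrix (Idx n) (Idx n) A) = 1 + Matrix.single i (Idx.neg i) c := rfl

end FormRingData
namespace FormRingData
variable {A : Type*} [Ring A] {n : ℕ} (D : FormRingData A)

theorem neg_inj_iff (i j : Idx n) : Idx.neg i = Idx.neg j ↔ i = j :=
  ⟨fun h => Idx.neg_injective h, fun h => by rw [h]⟩

theorem neg_ne_of_ne {i j : Idx n} (h : i ≠ Idx.neg j) : Idx.neg i ≠ j := by
  rintro rfl; exact h (Idx.neg_neg i).symm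

theorem comm_SS {i j l : Idx n} (hij : i ≠ j) (hij' : i ≠ Idx.neg j) (hjl : j ≠ l)
    (hjl' : j ≠ Idx.neg l) (hil : i ≠ l) (hil' : i ≠ Idx.neg l) (a b : A) :
    ⁅D.TS i j a, D.TS j l b⁆ = D.TS i l (a * b) := by
  apply comm_eq_aux
  apply Units.ext
  push_cast
  rw [D.TS_val hij, D.TS_val hjl, D.TS_val hil]
  have e1 := neg_ne_of_ne hij'
  have e2 := neg_ne_of_ne hjl'
  have e3 := neg_ne_of_ne hil'
  have e4 := Idx.neg_ne (n := n)
  have hm : D.mu j l * D.bar b * (D.mu i j * D.bar a) = D.mu i l * (D.bar b * D.bar a) :=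
    D.mu_mul_mul _ _ _ _ _
  apply ring_comm_SS
  · simp [Xmat_eq, sub_mul, mul_sub, neg_inj_iff, Matrix.single_mul_single_of_ne, D.bar_mul, hm,
      *, hij.symm, hjl.symm, hil.symm, hij'.symm, hjl'.symm, hil'.symm, e1.symm, e2.symm, e3.symm,
      (e4 _).symm]
  · simp [Xmat_eq, sub_mul, mul_sub, neg_inj_iff, Matrix.single_mul_single_of_ne, D.bar_mul, 
      *, hij.symm, hjl.symm, hil.symm, hij'.symm, hjl'.symm, hil'.symm, e1.symm, e2.symm, e3.symm,
      (e4 _).symm]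
  · simp [Xmat_eq, sub_mul, mul_sub, neg_inj_iff, Matrix.single_mul_single_of_ne, D.bar_mul, 
      *, hij.symm, hjl.symm, hil.symm, hij'.symm, hjl'.symm, hil'.symm, e1.symm, e2.symm, e3.symm,
      (e4 _).symm]

theorem comm_SSL {i j : Idx n} (hij : i ≠ j) (hij' : i ≠ Idx.neg j) (a b : A) :
    ⁅D.TS i j a, D.TS j (Idx.neg i) b⁆ =
      D.TL i (a * b - D.mu i (Idx.neg i) * D.bar (a * b)) := by
  have e1 := neg_ne_of_ne hij'
  have e4 := Idx.neg_ne (n := n)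
  apply comm_eq_aux
  apply Units.ext
  push_cast
  rw [D.TS_val hij, D.TS_val e1.symm, D.TL_val]
  have hm : D.mu j (Idx.neg i) * D.bar b * (D.mu i j * D.bar a) =
      D.mu i (Idx.neg i) * (D.bar b * D.bar a) :=
    D.mu_mul_mul _ _ _ _ _
  apply ring_comm_SS
  · simp [Xmat_eq, sub_mul, mul_sub, neg_inj_iff, Matrix.single_mul_single_of_ne, D.bar_mul, hm,
      *, hij.symm, hij'.symm, e1.symm, (e4 _).symm, Idx.neg_neg]
    rw [sub_eq_add_neg (a * b), Matrix.single_add, stdBasisMatrix_neg', sub_eq_add_neg]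
  · simp [Xmat_eq, sub_mul, mul_sub, neg_inj_iff, Matrix.single_mul_single_of_ne, D.bar_mul,
      *, hij.symm, hij'.symm, e1.symm, (e4 _).symm, Idx.neg_neg]
  · simp [Xmat_eq, sub_mul, mul_sub, neg_inj_iff, Matrix.single_mul_single_of_ne, D.bar_mul,
      *, hij.symm, hij'.symm, e1.symm, (e4 _).symm, Idx.neg_neg]

theorem comm_LS {i l : Idx n} (hil : i ≠ l) (hil' : i ≠ Idx.neg l) {g : A}
    (hg : g = -(D.lam * D.bar g)) (b : A) :
    ⁅D.TL i (D.nu i * g), D.TS (Idx.neg i) l b⁆ =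
      D.TS i l (D.nu i * g * b) * D.TL (Idx.neg l) (D.nu (Idx.neg l) * (-(D.bar b * g * b))) := by
  have e1 := neg_ne_of_ne hil'
  have e4 := Idx.neg_ne (n := n)
  have hs := D.nu_skew i hg
  generalize hA : D.nu i * g = a at *
  have hm : D.mu (Idx.neg i) l * D.bar b * a = -(D.mu i l * D.bar (a * b)) := by
    conv_lhs => rw [hs]
    rw [mul_neg, D.mu_mul_mul, D.bar_mul]
  have hm2 : D.nu (Idx.neg l) * (-(D.bar b * g * b)) = -(D.mu (Idx.neg i) l * D.bar b * a * b) := by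
    rw [← hA, ← D.mu_nu i l, mul_neg, mul_assoc (D.mu _ _), D.nu_comm, D.nu_comm i g]
    simp only [mul_assoc]
    rw [D.nu_comm i b]
  rw [hm2]
  apply comm_eq_aux
  apply Units.ext
  push_cast
  rw [D.TL_val, D.TL_val, D.TS_val e1, D.TS_val hil, Idx.neg_neg]
  have hz : (1 + D.Xmat i l (a * b)) * (1 + Matrix.single (Idx.neg l) l
      (-(D.mu (Idx.neg i) l * D.bar b * a * b))) = 1 + (Matrix.single i l (a * b)
      + Matrix.single (Idx.neg l) (Idx.neg i) (D.mu (Idx.neg i) l * D.bar b * a)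
      - Matrix.single (Idx.neg l) l (D.mu (Idx.neg i) l * D.bar b * a * b)) := by
    rw [hm]
    simp [Xmat_eq, sub_mul, mul_sub, add_mul, mul_add, neg_inj_iff, Matrix.single_mul_single_of_ne,
      hil, hil', e1, e4, hil.symm, hil'.symm, e1.symm, (e4 _).symm, Idx.neg_neg, stdBasisMatrix_neg']
    abel
  rw [hz]
  apply ring_comm_LS
  all_goals
    simp [Xmat_eq, sub_mul, mul_sub, add_mul, mul_add, neg_inj_iff, Matrix.single_mul_single_of_ne,
      hil, hil', e1, e4, hil.symm, hil'.symm, e1.symm, (e4 _).symm, Idx.neg_neg, 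
      stdBasisMatrix_neg', mul_assoc]
  try abel

/-- root matrices -/
def IsRootMat (i j : Idx n) (M : Matrix (Idx n) (Idx n) A) : Prop :=
  ∃ a b : A, M = Matrix.single i j a + Matrix.single (Idx.neg j) (Idx.neg i) b

/-- Root subgroup (as a set) of level `(I, Γ)`. -/
def RS (I Γ : AddSubgroup A) (i j : Idx n) : Set (GLn A n) :=
  {x | (i ≠ j ∧ i ≠ Idx.neg j ∧ ∃ c ∈ I, x = D.TS i j c) ∨
    (j = Idx.neg i ∧ ∃ g ∈ Γ, x = D.TL i (D.nu i * g))}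

theorem RS_mat {I Γ : AddSubgroup A} {i j : Idx n} {x : GLn A n} (hx : x ∈ D.RS I Γ i j) :
    ∃ M, IsRootMat i j M ∧ x.val = 1 + M := by
  rcases hx with ⟨h, h', c, -, rfl⟩ | ⟨rfl, g, -, rfl⟩
  · refine ⟨D.Xmat i j c, ⟨c, -(D.mu i j * D.bar c), ?_⟩, D.TS_val h c⟩
    rw [Xmat_eq, stdBasisMatrix_neg', sub_eq_add_neg]
  · exact ⟨_, ⟨D.nu i * g, 0, by simp⟩, D.TL_val i _⟩

theorem RS_comm {I Γ J Δ : AddSubgroup A} {i j k l : Idx n} {x y : GLn A n}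
    (hx : x ∈ D.RS I Γ i j) (hy : y ∈ D.RS J Δ k l) (h1 : j ≠ k) (h2 : i ≠ l)
    (h3 : j ≠ Idx.neg l) (h4 : i ≠ Idx.neg k) : ⁅x, y⁆ = 1 := by
  obtain ⟨M, ⟨a, b, rfl⟩, hM⟩ := D.RS_mat hx
  obtain ⟨M', ⟨a', b', rfl⟩, hM'⟩ := D.RS_mat hy
  apply comm_eq_aux
  apply Units.ext
  push_cast
  rw [hM, hM']
  have e3 := neg_ne_of_ne h3
  have e4 := neg_ne_of_ne h4
  simp [add_mul, mul_add, neg_inj_iff, Matrix.single_mul_single_of_ne,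
      h1, h2, h3, h4, h1.symm, h2.symm, h3.symm, h4.symm, e3, e4, e3.symm, e4.symm]
  abel

theorem RS_swap {FI : FormIdeal D} {i j : Idx n} {x : GLn A n}
    (hx : x ∈ D.RS FI.I FI.Gamma i j) : x ∈ D.RS FI.I FI.Gamma (Idx.neg j) (Idx.neg i) := by
  rcases hx with ⟨h, h', c, hc, rfl⟩ | ⟨rfl, g, hg, rfl⟩
  · have hh : Idx.neg j ≠ Idx.neg i := fun e => h (Idx.neg_injective e).symm
    refine Or.inl ⟨hh, ?_, -(D.mu i j * D.bar c), FI.I.neg_mem (FI.mul_mem_left _ _ (FI.bar_mem _ hc)),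
      ?_⟩
    · rw [Idx.neg_neg]; exact fun e => h' e.symm
    · apply Units.ext
      rw [D.TS_val h, D.TS_val hh, Xmat_eq, Xmat_eq, Idx.neg_neg, Idx.neg_neg, mu_neg, map_neg,
        D.bar_mul, D.mu_bar, D.bar_bar, mul_neg, ← D.mu_comm j i, ← mul_assoc, D.mu_mul, D.mu_self,
        one_mul, stdBasisMatrix_neg', stdBasisMatrix_neg']
      abel
  · rw [Idx.neg_neg]
    exact Or.inr ⟨rfl, g, hg, rfl⟩

theorem RS_inv {I Γ : AddSubgroup A} {i j : Idx n} {x : GLn A n}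
    (hx : x ∈ D.RS I Γ i j) : x⁻¹ ∈ D.RS I Γ i j := by
  rcases hx with ⟨h, h', c, hc, rfl⟩ | ⟨rfl, g, hg, rfl⟩
  · refine Or.inl ⟨h, h', -c, I.neg_mem hc, ?_⟩
    apply Units.ext
    rw [D.TS_val h]
    simp [TS, h]
  · refine Or.inr ⟨rfl, -g, Γ.neg_mem hg, ?_⟩
    apply Units.ext
    rw [D.TL_val, mul_neg]
    rfl

theorem RS_self_comm {I Γ J Δ : AddSubgroup A} {i j : Idx n} {x y : GLn A n}
    (hx : x ∈ D.RS I Γ i j) (hy : y ∈ D.RS J Δ i j) : ⁅x, y⁆ = 1 := by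
  have hij : i ≠ j := by
    rcases hx with ⟨h, -⟩ | ⟨rfl, -⟩
    · exact h
    · exact (Idx.neg_ne i).symm
  exact D.RS_comm hx hy hij.symm hij (Idx.neg_ne j).symm (Idx.neg_ne i).symm

theorem symI_comm (I J : AddSubgroup A) : symI I J = symI J I := sup_comm _ _

theorem symG_comm (I Γ J Δ : AddSubgroup A) : D.symG I Γ J Δ = D.symG J Δ I Γ := by
  rw [symG, symG, symI_comm, sup_assoc, sup_assoc, sup_comm (D.conjPar J Γ)]

/-- the vector of an index -/
def ev (i : Idx n) : Fin n → ℤ := Pi.single i.1 (Idx.eps i)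

theorem ev_neg (i : Idx n) : ev (Idx.neg i) = - ev i := by
  obtain ⟨i, _ | _⟩ := i <;> simp [ev, Idx.neg, Idx.eps, ← Pi.single_neg]

/-- the root of a pair of indices -/
def rt (i j : Idx n) : Fin n → ℤ := ev i - ev j

/-- generators in roots `s α + t β`, `s, t > 0` -/
def RSspan (I Γ : AddSubgroup A) (α β : Fin n → ℤ) : Set (GLn A n) :=
  {z | ∃ p q : Idx n, (∃ s t : ℤ, 0 < s ∧ 0 < t ∧ rt p q = s • α + t • β) ∧ z ∈ D.RS I Γ p q}

theorem RSspan_symm (I Γ : AddSubgroup A) (α β : Fin n → ℤ) :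
    D.RSspan I Γ α β = D.RSspan I Γ β α := by
  ext z
  constructor <;>
  · rintro ⟨p, q, ⟨s, t, hs, ht, h⟩, hz⟩
    exact ⟨p, q, ⟨t, s, ht, hs, by rw [h, add_comm]⟩, hz⟩

theorem mul_mem_symI {I J : AddSubgroup A} {a b : A} (ha : a ∈ I) (hb : b ∈ J) :
    a * b ∈ symI I J :=
  AddSubgroup.mem_sup_left (AddSubgroup.subset_closure ⟨a, ha, b, hb, rfl⟩)

theorem mul_mem_symI' {I J : AddSubgroup A} {a b : A} (ha : a ∈ I) (hb : b ∈ J) :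
    b * a ∈ symI I J :=
  AddSubgroup.mem_sup_right (AddSubgroup.subset_closure ⟨b, hb, a, ha, rfl⟩)

theorem chev_LS (FI FJ : FormIdeal D) {i l : Idx n} (hil : i ≠ l) (hil' : i ≠ Idx.neg l)
    {x y : GLn A n}
    (hx : x ∈ D.RS FI.I FI.Gamma i (Idx.neg i)) (hy : y ∈ D.RS FJ.I FJ.Gamma (Idx.neg i) l) :
    ⁅x, y⁆ ∈ Subgroup.closure (D.RSspan (symI FI.I FJ.I)
      (D.symG FI.I FI.Gamma FJ.I FJ.Gamma) (rt i (Idx.neg i)) (rt (Idx.neg i) l)) := by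
  rcases hx with ⟨-, h, -⟩ | ⟨-, g, hg, rfl⟩
  · exact absurd (Idx.neg_neg i).symm h
  rcases hy with ⟨-, -, b, hb, rfl⟩ | ⟨h, -⟩
  swap
  · exact absurd (h.trans (Idx.neg_neg i)).symm hil
  rw [D.comm_LS hil hil' (D.lambdaMax_mem g (FI.gamma_le_Lambda hg))]
  refine Subgroup.mul_mem _ (Subgroup.subset_closure ?_) (Subgroup.subset_closure ?_)
  · refine ⟨i, l, ⟨1, 1, one_pos, one_pos, by simp [rt]⟩, Or.inl ⟨hil, hil', _, ?_, rfl⟩⟩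
    exact mul_mem_symI (FI.mul_mem_left _ _ (FI.gamma_le_I hg)) hb
  · refine ⟨Idx.neg l, l, ⟨1, 2, one_pos, two_pos, ?_⟩,
      Or.inr ⟨(Idx.neg_neg l).symm, _, ?_, rfl⟩⟩
    · simp only [rt, ev_neg]; module
    · refine AddSubgroup.neg_mem _ (AddSubgroup.mem_sup_left (AddSubgroup.mem_sup_right ?_))
      exact AddSubgroup.subset_closure ⟨D.bar b, FJ.bar_mem _ hb, g, hg, by rw [D.bar_bar]⟩

theorem chev_A (FI FJ : FormIdeal D) {i j l : Idx n} (hij : i ≠ j) (hjl : j ≠ l) (hil : i ≠ l)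
    (hne : ¬ (j = Idx.neg i ∧ l = Idx.neg j))
    {x y : GLn A n}
    (hx : x ∈ D.RS FI.I FI.Gamma i j) (hy : y ∈ D.RS FJ.I FJ.Gamma j l) :
    ⁅x, y⁆ ∈ Subgroup.closure (D.RSspan (symI FI.I FJ.I)
      (D.symG FI.I FI.Gamma FJ.I FJ.Gamma) (rt i j) (rt j l)) := by
  by_cases hj : j = Idx.neg i
  · subst hj
    refine D.chev_LS FI FJ hil ?_ hx hy
    rintro rfl
    exact hjl (Idx.neg_neg l)
  by_cases hl : l = Idx.neg j
  · subst hl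
    have := D.chev_LS FJ FI (i := j) (l := Idx.neg i) (fun e => hj e) 
      (by rw [Idx.neg_neg]; exact hij.symm) hy (D.RS_swap hx)
    rw [← commutatorElement_inv]
    refine Subgroup.inv_mem _ ?_
    rw [RSspan_symm, symI_comm, symG_comm]
    have e : rt i j = rt (Idx.neg j) (Idx.neg i) := by simp only [rt, ev_neg]; abel
    rw [e]; exact this
  have hij' : i ≠ Idx.neg j := fun e => hj (by rw [e, Idx.neg_neg])
  have hjl' : j ≠ Idx.neg l := fun e => hl (by rw [e, Idx.neg_neg])
  rcases hx with ⟨-, -, a, ha, rfl⟩ | ⟨h, -⟩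
  swap
  · exact absurd h hj
  rcases hy with ⟨-, -, b, hb, rfl⟩ | ⟨h, -⟩
  swap
  · exact absurd h hl
  have hr : rt i l = (1 : ℤ) • rt i j + (1 : ℤ) • rt j l := by simp [rt]
  by_cases hli : l = Idx.neg i
  · subst hli
    rw [D.comm_SSL hij hij']
    obtain ⟨w, hw, e⟩ := D.nu_min i (a * b)
    rw [e]
    refine Subgroup.subset_closure ⟨i, _, ⟨1, 1, one_pos, one_pos, hr⟩, Or.inr ⟨rfl, _, ?_, rfl⟩⟩
    refine AddSubgroup.mem_sup_left (AddSubgroup.mem_sup_left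
      (AddSubgroup.subset_closure (Or.inl ⟨w, ?_, rfl⟩)))
    rcases hw with rfl | rfl
    · exact mul_mem_symI ha hb
    · rw [D.bar_mul]
      exact AddSubgroup.neg_mem _ (mul_mem_symI' (FI.bar_mem _ ha) (FJ.bar_mem _ hb))
  have hil' : i ≠ Idx.neg l := fun e => hli (by rw [e, Idx.neg_neg])
  rw [D.comm_SS hij hij' hjl hjl' hil hil']
  exact Subgroup.subset_closure ⟨i, l, ⟨1, 1, one_pos, one_pos, hr⟩,
    Or.inl ⟨hil, hil', _, mul_mem_symI ha hb, rfl⟩⟩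

theorem RS_ne {I Γ : AddSubgroup A} {i j : Idx n} {x : GLn A n}
    (hx : x ∈ D.RS I Γ i j) : i ≠ j := by
  rcases hx with ⟨h, -⟩ | ⟨rfl, -⟩
  · exact h
  · exact (Idx.neg_ne i).symm

theorem chev (FI FJ : FormIdeal D) {i j k l : Idx n} 
    (h1 : rt i j ≠ rt k l) (h2 : rt i j ≠ - rt k l)
    {x y : GLn A n}
    (hx : x ∈ D.RS FI.I FI.Gamma i j) (hy : y ∈ D.RS FJ.I FJ.Gamma k l) :
    ⁅x, y⁆ ∈ Subgroup.closure (D.RSspan (symI FI.I FJ.I)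
      (D.symG FI.I FI.Gamma FJ.I FJ.Gamma) (rt i j) (rt k l)) := by
  have hij := D.RS_ne hx
  have hkl := D.RS_ne hy
  have key : ∀ (FI FJ : FormIdeal D) {i j l : Idx n} {x y : GLn A n}, i ≠ j → j ≠ l →
      rt i j ≠ rt j l → rt i j ≠ - rt j l →
      x ∈ D.RS FI.I FI.Gamma i j → y ∈ D.RS FJ.I FJ.Gamma j l → 
      ⁅x, y⁆ ∈ Subgroup.closure (D.RSspan (symI FI.I FJ.I)
        (D.symG FI.I FI.Gamma FJ.I FJ.Gamma) (rt i j) (rt j l)) := by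
    intro FI FJ i j l x y hij hjl h1 h2 hx hy
    refine D.chev_A FI FJ hij hjl ?_ ?_ hx hy
    · rintro rfl; exact h2 (by simp [rt])
    · rintro ⟨rfl, rfl⟩; exact h2 (by simp only [rt, ev_neg]; abel)
  have sw : ∀ i j : Idx n, rt i j = rt (Idx.neg j) (Idx.neg i) := by
    intro i j; simp only [rt, ev_neg]; abel
  by_cases hjk : j = k
  · subst hjk
    exact key FI FJ hij hkl h1 h2 hx hy
  by_cases hil : i = l
  · subst hil
    rw [← commutatorElement_inv, RSspan_symm, symI_comm, symG_comm]
    exact Subgroup.inv_mem _ (key FJ FI hkl hij h1.symm (fun e => h2 (by rw [e, neg_neg])) hy hx)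
  by_cases hjl : j = Idx.neg l
  · subst hjl
    rw [sw k l] at *
    exact key FI FJ hij (fun e => hkl (Idx.neg_injective e).symm) h1 h2 hx (D.RS_swap hy)
  by_cases hik : i = Idx.neg k
  · subst hik
    rw [← commutatorElement_inv, RSspan_symm, symI_comm, symG_comm]
    rw [sw k l] at *
    exact Subgroup.inv_mem _ (key FJ FI (fun e => hkl (Idx.neg_injective e).symm) hij h1.symm
      (fun e => h2 (by rw [e, neg_neg])) (D.RS_swap hy) hx)
  rw [D.RS_comm hx hy hjk hil hjl hik]
  exact Subgroup.one_mem _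

end FormRingData
namespace FormRingData
variable {A : Type*} [Ring A] {n : ℕ} (D : FormRingData A)

theorem rt_apply (i j : Idx n) (p : Fin n) : rt i j p =
    (if p = i.1 then (if i.2 then 1 else -1) else 0) -
      (if p = j.1 then (if j.2 then 1 else -1) else 0) := by
  simp [rt, ev, Pi.single_apply, Idx.eps]

theorem rt_par {i j k l : Idx n} (hij : i ≠ j) (hkl : k ≠ l) {t m : ℤ} (ht : 0 < t)
    (h : t • rt k l = m • rt i j) :
    (k = i ∧ l = j) ∨ (k = Idx.neg j ∧ l = Idx.neg i) ∨
    (k = j ∧ l = i) ∨ (k = Idx.neg i ∧ l = Idx.neg j) := by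
  obtain ⟨i, bi⟩ := i
  obtain ⟨j, bj⟩ := j
  obtain ⟨k, bk⟩ := k
  obtain ⟨l, bl⟩ := l
  have h1 := congrFun h i
  have h2 := congrFun h j
  have h3 := congrFun h k
  have h4 := congrFun h l
  simp only [Pi.smul_apply, smul_eq_mul, rt_apply] at h1 h2 h3 h4
  simp only [ne_eq, Prod.mk.injEq, Idx.neg] at *
  clear h
  cases bi <;> cases bj <;> cases bk <;> cases bl <;> simp at * <;> grind

theorem rt_ne_zero {i j : Idx n} (hij : i ≠ j) : rt i j ≠ 0 := by
  intro h
  obtain ⟨i, bi⟩ := i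
  obtain ⟨j, bj⟩ := j
  have h1 := congrFun h i
  simp only [rt_apply, Pi.zero_apply] at h1
  simp only [ne_eq, Prod.mk.injEq] at *
  cases bi <;> cases bj <;> simp at * <;> grind

theorem rt_par' {i j k l : Idx n} (hij : i ≠ j) (hkl : k ≠ l) {t m : ℤ} (ht : 0 < t)
    (h : t • rt k l = m • rt i j) : rt i j = rt k l ∨ rt i j = - rt k l := by
  rcases rt_par hij hkl ht h with ⟨rfl, rfl⟩ | ⟨rfl, rfl⟩ | ⟨rfl, rfl⟩ | ⟨rfl, rfl⟩
  · exact Or.inl rfl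
  · left; simp only [rt, ev_neg]; abel
  · right; simp only [rt]; abel
  · right; simp only [rt, ev_neg]; abel

theorem rt_inj {i j k l : Idx n} (hij : i ≠ j) (hkl : k ≠ l) (h : rt i j = rt k l) :
    (k = i ∧ l = j) ∨ (k = Idx.neg j ∧ l = Idx.neg i) := by
  have hn : rt i j ≠ - rt i j := by
    intro e
    exact rt_ne_zero hij (self_eq_neg.1 e)
  rcases rt_par (t := 1) (m := 1) hij hkl one_pos (by rw [h]) with h1 | h1 | ⟨rfl, rfl⟩ | ⟨rfl, rfl⟩
  · exact Or.inl h1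
  · exact Or.inr h1
  · exact absurd (h.trans (by simp only [rt]; abel)) hn
  · exact absurd (h.trans (by simp only [rt, ev_neg]; abel)) hn

/-- the form ideal `(A, Λ)` -/
def topIdeal : FormIdeal D where
  I := ⊤
  Gamma := D.Lambda
  mul_mem_left := fun _ _ _ => trivial
  mul_mem_right := fun _ _ _ => trivial
  bar_mem := fun _ _ => trivial
  gammaMin_le := by
    refine (AddSubgroup.closure_le _).2 ?_
    rintro x (⟨a, -, rfl⟩ | ⟨a, -, c, hc, rfl⟩)
    · exact D.lambdaMin_mem a
    · exact D.lambda_conj a c hc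
  gamma_le_I := le_top
  gamma_le_Lambda := le_rfl
  gamma_conj := D.lambda_conj

theorem RS_mono {I Γ J Δ : AddSubgroup A} (h : I ≤ J) (h' : Γ ≤ Δ) (i j : Idx n) :
    D.RS I Γ i j ⊆ D.RS J Δ i j := by
  rintro x (⟨h1, h2, c, hc, rfl⟩ | ⟨rfl, g, hg, rfl⟩)
  · exact Or.inl ⟨h1, h2, c, h hc, rfl⟩
  · exact Or.inr ⟨rfl, g, h' hg, rfl⟩

theorem RSspan_mono {I Γ J Δ : AddSubgroup A} (h : I ≤ J) (h' : Γ ≤ Δ) (α β : Fin n → ℤ) :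
    D.RSspan I Γ α β ⊆ D.RSspan J Δ α β := by
  rintro x ⟨p, q, e, hx⟩
  exact ⟨p, q, e, D.RS_mono h h' p q hx⟩

theorem mem_transvGen {I Γ : AddSubgroup A} {x : GLn A n} :
    x ∈ D.transvGen n I Γ ↔ ∃ i j, x ∈ D.RS I Γ i j := by
  constructor
  · rintro (⟨i, j, h1, h2, c, hc, rfl⟩ | ⟨i, g, hg, rfl⟩)
    · exact ⟨i, j, Or.inl ⟨h1, h2, c, hc, rfl⟩⟩
    · exact ⟨i, _, Or.inr ⟨rfl, g, hg, rfl⟩⟩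
  · rintro ⟨i, j, ⟨h1, h2, c, hc, rfl⟩ | ⟨rfl, g, hg, rfl⟩⟩
    · exact Or.inl ⟨i, j, h1, h2, c, hc, rfl⟩
    · exact Or.inr ⟨i, g, hg, rfl⟩

theorem sym_top_I (FI : FormIdeal D) : symI FI.I (topIdeal D).I ≤ FI.I := by
  refine sup_le ((AddSubgroup.closure_le _).2 ?_) ((AddSubgroup.closure_le _).2 ?_)
  · rintro _ ⟨a, ha, b, -, rfl⟩; exact FI.mul_mem_right _ _ ha
  · rintro _ ⟨a, -, b, hb, rfl⟩; exact FI.mul_mem_left _ _ hb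

theorem sym_top_G (FI : FormIdeal D) :
    D.symG FI.I FI.Gamma (topIdeal D).I (topIdeal D).Gamma ≤ FI.Gamma := by
  refine sup_le (sup_le ((AddSubgroup.closure_le _).2 ?_) ((AddSubgroup.closure_le _).2 ?_))
    ((AddSubgroup.closure_le _).2 ?_)
  · rintro x (⟨a, ha, rfl⟩ | ⟨a, ha, c, hc, rfl⟩)
    · exact FI.gammaMin_le (AddSubgroup.subset_closure (Or.inl ⟨a, D.sym_top_I FI ha, rfl⟩))
    · exact FI.gammaMin_le
        (AddSubgroup.subset_closure (Or.inr ⟨a, D.sym_top_I FI ha, c, hc, rfl⟩))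
  · rintro _ ⟨b, -, g, hg, rfl⟩; exact FI.gamma_conj b g hg
  · rintro _ ⟨b, hb, g, hg, rfl⟩
    exact FI.gammaMin_le (AddSubgroup.subset_closure (Or.inr ⟨b, hb, g, hg, rfl⟩))

theorem RS_EUmax (FI : FormIdeal D) {i j : Idx n} {x : GLn A n}
    (hx : x ∈ D.RS FI.I FI.Gamma i j) : x ∈ D.EUmax n :=
  Subgroup.subset_closure ((D.mem_transvGen).2
    ⟨i, j, D.RS_mono le_top FI.gamma_le_Lambda i j hx⟩)

theorem EU_conj (I Γ : AddSubgroup A) : ∀ g ∈ D.EUmax n, ∀ x ∈ D.EU n I Γ,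
    g * x * g⁻¹ ∈ D.EU n I Γ := by
  intro g hg x hx
  unfold EU at hx
  induction hx using Subgroup.closure_induction with
  | mem x hx =>
    obtain ⟨h, hh, t, ht, rfl⟩ := hx
    exact Subgroup.subset_closure ⟨g * h, Subgroup.mul_mem _ hg hh, t, ht, by group⟩
  | one => simpa using Subgroup.one_mem _
  | mul a b _ _ ha hb =>
    have := Subgroup.mul_mem _ ha hb
    have e : g * (a * b) * g⁻¹ = g * a * g⁻¹ * (g * b * g⁻¹) := by group
    rw [e]; exact this
  | inv a _ ha =>
    have := Subgroup.inv_mem _ ha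
    have e : g * a⁻¹ * g⁻¹ = (g * a * g⁻¹)⁻¹ := by group
    rw [e]; exact this

theorem RS_EU {I Γ : AddSubgroup A} {i j : Idx n} {x : GLn A n}
    (hx : x ∈ D.RS I Γ i j) : x ∈ D.EU n I Γ :=
  Subgroup.subset_closure ⟨1, Subgroup.one_mem _, x, (D.mem_transvGen).2 ⟨i, j, hx⟩, by group⟩

theorem nonopp (FI FJ : FormIdeal D) {i j k l : Idx n} (h : rt i j ≠ - rt k l)
    {x y : GLn A n} (hx : x ∈ D.RS FI.I FI.Gamma i j) (hy : y ∈ D.RS FJ.I FJ.Gamma k l) :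
    ⁅x, y⁆ ∈ D.EUsym n FI.I FI.Gamma FJ.I FJ.Gamma := by
  by_cases h1 : rt i j = rt k l
  · have : ⁅x, y⁆ = 1 := by
      rcases rt_inj (D.RS_ne hx) (D.RS_ne hy) h1 with ⟨rfl, rfl⟩ | ⟨rfl, rfl⟩
      · exact D.RS_self_comm hx hy
      · exact D.RS_self_comm (D.RS_swap hx) hy
    rw [this]; exact Subgroup.one_mem _
  · refine (Subgroup.closure_le _).2 ?_ (D.chev FI FJ h1 h hx hy)
    rintro z ⟨p, q, -, hz⟩
    exact D.RS_EU hz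

theorem main_nonpar (FI FJ : FormIdeal D) {i j i' j' k l : Idx n} (hop : rt i' j' = - rt i j)
    (h1 : rt i j ≠ rt k l) (h2 : rt i j ≠ - rt k l) {x y z : GLn A n}
    (hx : x ∈ D.RS FI.I FI.Gamma i j) (hy : y ∈ D.RS FJ.I FJ.Gamma i' j')
    (hz : z ∈ D.RS ⊤ D.Lambda k l) :
    ⁅⁅x, y⁆, z⁆ ∈ D.EUsym n FI.I FI.Gamma FJ.I FJ.Gamma := by
  have hij := D.RS_ne hx
  have hkl := D.RS_ne hz
  have hu : ⁅x⁻¹, z⁆ ∈ Subgroup.closure (D.RSspan FI.I FI.Gamma (rt i j) (rt k l)) :=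
    Subgroup.closure_mono (D.RSspan_mono (D.sym_top_I FI) (D.sym_top_G FI) _ _)
      (D.chev FI D.topIdeal h1 h2 (D.RS_inv hx) hz)
  have hv : ⁅y⁻¹, z⁆ ∈ Subgroup.closure (D.RSspan FJ.I FJ.Gamma (rt i' j') (rt k l)) :=
    Subgroup.closure_mono (D.RSspan_mono (D.sym_top_I FJ) (D.sym_top_G FJ) _ _)
      (D.chev FJ D.topIdeal (by rw [hop]; exact fun e => h2 (by rw [← e, neg_neg]))
        (by rw [hop]; exact fun e => h1 (neg_injective e)) (D.RS_inv hy) hz)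
  rw [hop] at hv
  have bad : ∀ t m : ℤ, 0 < t → t • rt k l ≠ m • rt i j := by
    intro t m ht e
    rcases rt_par' hij hkl ht e with h | h
    · exact h1 h
    · exact h2 h
  have hN := D.EU_conj (n := n) (symI FI.I FJ.I) (D.symG FI.I FI.Gamma FJ.I FJ.Gamma)
  have hUE : ∀ (FI : FormIdeal D) (α β : Fin n → ℤ), D.RSspan FI.I FI.Gamma α β ⊆ D.EUmax n := by
    rintro FI α β w ⟨p, q, -, hw⟩
    exact D.RS_EUmax FI hw
  refine key_aux _ (D.EUmax n) hN (D.RS_EUmax FI hx) (D.RS_EUmax FJ hy) ?_ ?_ ?_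
  · refine com_closure_aux _ _ hN _ (hUE FI _ _) y ?_ _ hu
    rintro w ⟨p, q, ⟨s, t, hs, ht, e⟩, hw⟩
    refine D.nonopp FI FJ (fun e' => bad t (1 - s) ht ?_) hw hy
    rw [e, hop, neg_neg] at e'
    rw [sub_smul, one_smul]; exact eq_sub_of_add_eq' e'
  · refine com_symm_aux _ (com_closure_aux _ _ hN _ (hUE FJ _ _) x ?_ _ hv)
    rintro w ⟨p, q, ⟨s, t, hs, ht, e⟩, hw⟩
    refine com_symm_aux _ (D.nonopp FI FJ (fun e' => bad t (s - 1) ht ?_) hx hw)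
    rw [e] at e'
    have : t • rt k l = s • rt i j - -(s • -rt i j + t • rt k l) := by module
    rw [this, ← e']; module
  · refine com_closure2_aux _ _ hN _ _ (hUE FI _ _) (hUE FJ _ _) ?_ _ hu _ hv
    rintro w ⟨p, q, ⟨s, t, hs, ht, e⟩, hw⟩ w' ⟨p', q', ⟨s', t', hs', ht', e1⟩, hw'⟩
    refine D.nonopp FI FJ (fun e' => bad (t + t') (s' - s) (by positivity) ?_) hw hw'
    rw [e, e1] at e'
    have : (t + t') • rt k l = (s • rt i j + t • rt k l) - s • rt i j + t' • rt k l := by module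
    rw [this, e']; module

theorem exists_idx (hn : 3 ≤ n) (k l : Idx n) : ∃ h : Idx n, h.1 ≠ k.1 ∧ h.1 ≠ l.1 := by
  have : ({k.1, l.1} : Finset (Fin n)).card < (Finset.univ : Finset (Fin n)).card := by
    refine lt_of_le_of_lt Finset.card_le_two ?_
    simp; omega
  obtain ⟨p, -, hp⟩ := Finset.exists_mem_notMem_of_card_lt_card this
  simp only [Finset.mem_insert, Finset.mem_singleton, not_or] at hp
  exact ⟨(p, true), hp.1, hp.2⟩

theorem span_nonpar (hn : 3 ≤ n) {k l : Idx n} {z : GLn A n} (hz : z ∈ D.RS ⊤ D.Lambda k l) :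
    z ∈ Subgroup.closure {w | ∃ p q : Idx n, rt k l ≠ rt p q ∧ rt k l ≠ - rt p q ∧
      w ∈ D.RS ⊤ D.Lambda p q} := by
  obtain ⟨h, hk, hl⟩ := exists_idx hn k l
  have hkl := D.RS_ne hz
  have nn : ∀ i j : Idx n, i.1 ≠ j.1 → i ≠ j ∧ i ≠ Idx.neg j := by
    intro i j hij
    exact ⟨fun e => hij (by rw [e]), fun e => hij (by rw [e]; rfl)⟩
  have np : ∀ p q : Idx n, rt p q h.1 ≠ 0 → rt k l ≠ rt p q ∧ rt k l ≠ - rt p q := by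
    intro p q hpq
    have h0 : rt k l h.1 = 0 := by simp [rt_apply, hk, hl]
    refine ⟨fun e => hpq (by rw [← e, h0]), fun e => hpq ?_⟩
    have := congrFun e h.1
    rw [h0, Pi.neg_apply] at this
    omega
  rcases hz with ⟨h1, h2, c, -, rfl⟩ | ⟨rfl, g, hg, rfl⟩
  · rw [← mul_one c, ← D.comm_SS (nn k h hk.symm).1 (nn k h hk.symm).2 (nn h l hl).1 (nn h l hl).2
      h1 h2 c 1]
    have m1 : D.TS k h c ∈ Subgroup.closure {w | ∃ p q : Idx n, rt k l ≠ rt p q ∧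
        rt k l ≠ - rt p q ∧ w ∈ D.RS ⊤ D.Lambda p q} := by
      obtain ⟨a, b⟩ := np k h (by simp [rt_apply, hk]; split_ifs <;> simp)
      exact Subgroup.subset_closure ⟨k, h, a, b,
        Or.inl ⟨(nn k h hk.symm).1, (nn k h hk.symm).2, c, trivial, rfl⟩⟩
    have m2 : D.TS h l 1 ∈ Subgroup.closure {w | ∃ p q : Idx n, rt k l ≠ rt p q ∧
        rt k l ≠ - rt p q ∧ w ∈ D.RS ⊤ D.Lambda p q} := by
      obtain ⟨a, b⟩ := np h l (by simp [rt_apply, hl]; split_ifs <;> simp)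
      exact Subgroup.subset_closure ⟨h, l, a, b,
        Or.inl ⟨(nn h l hl).1, (nn h l hl).2, 1, trivial, rfl⟩⟩
    exact Subgroup.mul_mem _ (Subgroup.mul_mem _ (Subgroup.mul_mem _ m1 m2)
      (Subgroup.inv_mem _ m1)) (Subgroup.inv_mem _ m2)
  · have hg' := D.Lambda.neg_mem hg
    have hc := D.comm_LS (i := h) (l := Idx.neg k) (nn _ _ hl).1 (nn _ _ hl).2
      (D.lambdaMax_mem _ hg') 1
    rw [D.bar_one, Idx.neg_neg, one_mul, mul_one, mul_one, _root_.neg_neg] at hc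
    rw [eq_inv_mul_iff_mul_eq.2 hc.symm]
    have hkk : rt (Idx.neg h) (Idx.neg k) h.1 ≠ 0 := by
      have : h.1 ≠ (Idx.neg k).1 := hk
      simp only [rt_apply, this, if_false]
      simp [Idx.neg]; split_ifs <;> simp
    have m1 : D.TL h (D.nu h * (-g)) ∈ Subgroup.closure {w | ∃ p q : Idx n,
        rt k (Idx.neg k) ≠ rt p q ∧
        rt k (Idx.neg k) ≠ - rt p q ∧ w ∈ D.RS ⊤ D.Lambda p q} := by
      obtain ⟨a, b⟩ := np h (Idx.neg h) (by simp [rt_apply, Idx.neg]; split_ifs <;> simp_all)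
      exact Subgroup.subset_closure ⟨h, _, a, b, Or.inr ⟨rfl, _, hg', rfl⟩⟩
    have m2 : D.TS (Idx.neg h) (Idx.neg k) 1 ∈ Subgroup.closure {w | ∃ p q : Idx n,
        rt k (Idx.neg k) ≠ rt p q ∧
        rt k (Idx.neg k) ≠ - rt p q ∧ w ∈ D.RS ⊤ D.Lambda p q} := by
      obtain ⟨a, b⟩ := np _ _ hkk
      have := nn (Idx.neg h) (Idx.neg k) hk
      exact Subgroup.subset_closure ⟨_, _, a, b, Or.inl ⟨this.1, this.2, 1, trivial, rfl⟩⟩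
    have m3 : D.TS h (Idx.neg k) (D.nu h * (-g)) ∈ Subgroup.closure {w | ∃ p q : Idx n,
        rt k (Idx.neg k) ≠ rt p q ∧
        rt k (Idx.neg k) ≠ - rt p q ∧ w ∈ D.RS ⊤ D.Lambda p q} := by
      obtain ⟨a, b⟩ := np h (Idx.neg k) (by
        have : h.1 ≠ (Idx.neg k).1 := hk
        simp only [rt_apply, this, if_false]
        simp; split_ifs <;> simp)
      have := nn h (Idx.neg k) hk
      exact Subgroup.subset_closure ⟨_, _, a, b, Or.inl ⟨this.1, this.2, _, trivial, rfl⟩⟩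
    exact Subgroup.mul_mem _ (Subgroup.inv_mem _ m3) (Subgroup.mul_mem _ (Subgroup.mul_mem _
      (Subgroup.mul_mem _ m1 m2) (Subgroup.inv_mem _ m1)) (Subgroup.inv_mem _ m2))

theorem main_gen (hn : 3 ≤ n) (FI FJ : FormIdeal D) {i j k l : Idx n} {x y : GLn A n}
    (hx : x ∈ D.RS FI.I FI.Gamma i j) (hy : y ∈ D.RS FJ.I FJ.Gamma k l) {z : GLn A n}
    (hz : z ∈ D.EUmax n) : ⁅⁅x, y⁆, z⁆ ∈ D.EUsym n FI.I FI.Gamma FJ.I FJ.Gamma := by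
  have hN := D.EU_conj (n := n) (symI FI.I FJ.I) (D.symG FI.I FI.Gamma FJ.I FJ.Gamma)
  by_cases hop : rt i j = - rt k l
  swap
  · have h := D.nonopp FI FJ hop hx hy
    have : ⁅⁅x, y⁆, z⁆ = ⁅x, y⁆ * (z * ⁅x, y⁆⁻¹ * z⁻¹) := by
      rw [commutatorElement_def ⁅x, y⁆ z]; group
    rw [this]
    exact Subgroup.mul_mem _ h (hN _ hz _ (Subgroup.inv_mem _ h))
  have hop' : rt k l = - rt i j := by rw [hop, _root_.neg_neg]
  refine com_symm_aux _ (com_closure_aux _ (D.EUmax n) hN _ Subgroup.subset_closure _ ?_ z hz)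
  intro z hz
  obtain ⟨p, q, hz⟩ := (D.mem_transvGen).1 hz
  apply com_symm_aux
  by_cases h1 : rt i j = rt p q ∨ rt i j = - rt p q
  · refine com_symm_aux _ (com_closure_aux _ (D.EUmax n) hN _ ?_ _ ?_ z (D.span_nonpar hn hz))
    · rintro w ⟨p, q, -, -, hw⟩
      exact D.RS_EUmax D.topIdeal hw
    · rintro w ⟨p', q', a, b, hw⟩
      refine com_symm_aux _ (D.main_nonpar FI FJ hop' ?_ ?_ hx hy hw)
      · rcases h1 with h1 | h1 <;> rw [h1]
        · exact a
        · exact fun e => b (by rw [← e, _root_.neg_neg])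
      · rcases h1 with h1 | h1 <;> rw [h1]
        · exact b
        · exact fun e => a (neg_injective e)
  · rw [not_or] at h1
    exact D.main_nonpar FI FJ hop' h1.1 h1.2 hx hy hz

end FormRingData

/-- Theorem 5: `[FU(2n,I,Γ), FU(2n,J,Δ)]` is central in `EU(2n,A,Λ)` modulo
`EU(2n,(I,Γ)∘(J,Δ))`. -/
theorem statement2 {A : Type*} [Ring A] (D : FormRingData A) (n : ℕ) (hn : 3 ≤ n)
    (FI FJ : FormIdeal D) :
    ⁅⁅D.FU n FI.I FI.Gamma, D.FU n FJ.I FJ.Gamma⁆, D.EUmax n⁆ ≤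
      D.EUsym n FI.I FI.Gamma FJ.I FJ.Gamma := by
  have hN := D.EU_conj (n := n) (FormRingData.symI FI.I FJ.I) (D.symG FI.I FI.Gamma FJ.I FJ.Gamma)
  have hs : ∀ FI : FormIdeal D, D.transvGen n FI.I FI.Gamma ⊆ D.EUmax n := by
    intro FI x hx
    obtain ⟨i, j, hx⟩ := (D.mem_transvGen).1 hx
    exact D.RS_EUmax FI hx
  have key : ∀ x ∈ D.FU n FI.I FI.Gamma, ∀ y ∈ D.FU n FJ.I FJ.Gamma,
      ⁅x, y⁆ ∈ cenMod _ (D.EUmax n) hN := by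
    refine com_closure2_aux _ (D.EUmax n) (cenMod_conj _ _ hN) _ _ (hs FI) (hs FJ) ?_
    intro x hx y hy
    have hxE := hs FI hx
    have hyE := hs FJ hy
    obtain ⟨i, j, hx⟩ := (D.mem_transvGen).1 hx
    obtain ⟨k, l, hy⟩ := (D.mem_transvGen).1 hy
    exact ⟨Subgroup.mul_mem _ (Subgroup.mul_mem _ (Subgroup.mul_mem _ hxE hyE)
      (Subgroup.inv_mem _ hxE)) (Subgroup.inv_mem _ hyE), fun z hz => D.main_gen hn FI FJ hx hy hz⟩
  rw [Subgroup.commutator_le]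
  intro c hc z hz
  exact ((Subgroup.commutator_le.2 key) hc).2 z hz
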